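/- arXiv:2112.02284 — 4 statements merged into one kernel-verified Lean document; each statement's English description precedes it below -/
import Mathlib

section
/- Let a ∈ (0,∞) and let X₁, X₂ be real random variables such that E[e^{−aX₁}] and E[e^{−aX₂}] are finite, so that h_a(X₁) and h_a(X₂) are finite. If X₁ − X₂ is not almost surely constant (i.e., ℙ(X₁ − X₂ = c) < 1 for every c ∈ ℝ), then for every α ∈ (0,1), h_a(αX₁ + (1−α)X₂) < α·h_a(X₁) + (1−α)·h_a(X₂). -/
/-!
Shifting `u` and `v` by constants moves both sides of
`log ∫ e^{αu + βv} < α log ∫ e^u + β log ∫ e^v` (with `α + β = 1`) by the same amount, so one may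
assume `∫ e^u = ∫ e^v = 1`. Unless `u = v` almost everywhere, strict convexity of `exp` then gives
`∫ e^{αu + βv} < α + β = 1`. The shifted functions agree almost everywhere only if `u - v` was
almost everywhere constant, and the entropic risk measure is the case `u = -aX₁`, `v = -aX₂`.
-/

open MeasureTheory Filter Set
open scoped ENNReal

noncomputable section

variable {Ω : Type*} [MeasurableSpace Ω]

/-- Entropic risk measure `h_a(X) = (1/a) log E[e^{-aX}]`. -/
def entropic (P : Measure Ω) (a : ℝ) (X : Ω → ℝ) : ℝ :=
  (1 / a) * Real.log (∫ ω, Real.exp (-a * X ω) ∂P)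

/-- Weighted entropic risk measure `h(X) = ∫_{[a₀,a₁]} h_a(X) m(da)`. -/
def werm (P : Measure Ω) (m : Measure ℝ) (a₀ a₁ : ℝ) (X : Ω → ℝ) : ℝ :=
  ∫ a in Set.Icc a₀ a₁, entropic P a X ∂m

/-- Marginal risk density transform `h′(X) = -∫_{[a₀,a₁]} e^{-aX}/E[e^{-aX}] m(da)`. -/
def hprime (P : Measure Ω) (m : Measure ℝ) (a₀ a₁ : ℝ) (X : Ω → ℝ) (ω : Ω) : ℝ :=
  -∫ a in Set.Icc a₀ a₁, Real.exp (-a * X ω) / (∫ ω', Real.exp (-a * X ω') ∂P) ∂m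

/-- Extended-real-valued expectation `E[f] = ∫ f⁺ - ∫ f⁻ ∈ [-∞,∞]`. -/
def eint (P : Measure Ω) (f : Ω → ℝ) : EReal :=
  ((∫⁻ ω, ENNReal.ofReal (f ω) ∂P : ℝ≥0∞) : EReal)
    - ((∫⁻ ω, ENNReal.ofReal (-(f ω)) ∂P : ℝ≥0∞) : EReal)

/-- `E[ρX] ∈ [0,∞]` for a nonnegative payoff. -/
def budget (P : Measure Ω) (ρ X : Ω → ℝ) : ℝ≥0∞ := ∫⁻ ω, ENNReal.ofReal (ρ ω * X ω) ∂P

/-- `X ∈ L⁰₊`: a nonnegative random variable. -/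
def Lpos (P : Measure Ω) (X : Ω → ℝ) : Prop := Measurable X ∧ ∀ᵐ ω ∂P, 0 ≤ X ω

/-- Objective of the Lagrangian risk-minimization problem: `h(X) + λ E[ρX]`. -/
def robj (P : Measure Ω) (m : Measure ℝ) (a₀ a₁ : ℝ) (ρ : Ω → ℝ) (lam : ℝ) (X : Ω → ℝ) : EReal :=
  ((werm P m a₀ a₁ X : ℝ) : EReal) + (lam : EReal) * ((budget P ρ X : ℝ≥0∞) : EReal)

/-- `ψ_X(y) = ∫_{[a₀,a₁]} e^{-ay} / E[e^{-aX}] m(da)`. -/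
def psi (P : Measure Ω) (m : Measure ℝ) (a₀ a₁ : ℝ) (X : Ω → ℝ) (y : ℝ) : ℝ :=
  ∫ a in Set.Icc a₀ a₁, Real.exp (-a * y) / (∫ ω, Real.exp (-a * X ω) ∂P) ∂m

/-- Inverse of `ψ_X` on `(0,∞)` (realized via `sSup`, since `ψ_X` is continuous, strictly
decreasing with limits `∞` at `-∞` and `0` at `∞`). -/
def psiInv (P : Measure Ω) (m : Measure ℝ) (a₀ a₁ : ℝ) (X : Ω → ℝ) (z : ℝ) : ℝ :=
  sSup {y : ℝ | z ≤ psi P m a₀ a₁ X y}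

/-- The transform `𝐓X = max(ψ_X⁻¹(λρ), 0)`. -/
def Ttrans (P : Measure Ω) (m : Measure ℝ) (a₀ a₁ lam : ℝ) (ρ : Ω → ℝ) (X : Ω → ℝ) : Ω → ℝ :=
  fun ω => max (psiInv P m a₀ a₁ X (lam * ρ ω)) 0

/-- `X ∈ 𝒳(x)`: nonnegative and `E[ρX] ≤ x`. -/
def feasible (P : Measure Ω) (ρ : Ω → ℝ) (x : ℝ) (X : Ω → ℝ) : Prop :=
  Lpos P X ∧ budget P ρ X ≤ ENNReal.ofReal x

/-- `γ₁(x)`: the minimal value of `h` over `𝒳(x)`. -/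
def gamma1 (P : Measure Ω) (m : Measure ℝ) (a₀ a₁ : ℝ) (ρ : Ω → ℝ) (x : ℝ) : ℝ :=
  sInf (werm P m a₀ a₁ '' {X | feasible P ρ x X})

/-- Expected utility `E[U(X)] ∈ [-∞,∞]`. -/
def eutil (P : Measure Ω) (U : ℝ → ℝ) (X : Ω → ℝ) : EReal := eint P (fun ω => U (X ω))

/-- Full Lagrangian objective `E[U(X)] - μ h(X) - λ E[ρX]`. -/
def fullObj (P : Measure Ω) (m : Measure ℝ) (a₀ a₁ : ℝ) (ρ : Ω → ℝ) (U : ℝ → ℝ)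
    (μ lam : ℝ) (X : Ω → ℝ) : EReal :=
  eutil P U X - ((μ * werm P m a₀ a₁ X : ℝ) : EReal)
    - (lam : EReal) * ((budget P ρ X : ℝ≥0∞) : EReal)

section ConvexCombination

variable {μ : Measure Ω} {α β : ℝ}

theorem integral_comp_combo_lt_of_strictConvexOn {E : Type*} [AddCommMonoid E] [Module ℝ E]
    {s : Set E} {f : E → ℝ} (hf : StrictConvexOn ℝ s f) {u v : Ω → E}
    (hus : ∀ᵐ ω ∂μ, u ω ∈ s) (hvs : ∀ᵐ ω ∂μ, v ω ∈ s)
    (hu : Integrable (fun ω => f (u ω)) μ) (hv : Integrable (fun ω => f (v ω)) μ)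
    (huv : Integrable (fun ω => f (α • u ω + β • v ω)) μ) (hne : ¬ u =ᵐ[μ] v)
    (hα : 0 < α) (hβ : 0 < β) (hαβ : α + β = 1) :
    ∫ ω, f (α • u ω + β • v ω) ∂μ < α * ∫ ω, f (u ω) ∂μ + β * ∫ ω, f (v ω) ∂μ := by
  have hle : ∀ᵐ ω ∂μ, f (α • u ω + β • v ω) ≤ α * f (u ω) + β * f (v ω) := by
    filter_upwards [hus, hvs] with ω huω hvω
    exact hf.convexOn.2 huω hvω hα.le hβ.le hαβ
  have hcombo : Integrable (fun ω => α * f (u ω) + β * f (v ω)) μ :=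
    (hu.const_mul α).add (hv.const_mul β)
  rw [← integral_const_mul, ← integral_const_mul,
    ← integral_add (hu.const_mul α) (hv.const_mul β)]
  refine (integral_mono_ae huv hcombo hle).lt_of_ne fun heq => hne ?_
  filter_upwards [hus, hvs, (integral_eq_iff_of_ae_le huv hcombo hle).1 heq] with ω huω hvω hω
  by_contra hneω
  exact (hf.2 huω hvω hneω hα hβ hαβ).ne hω

variable {u v : Ω → ℝ}

theorem integrable_exp_combo (hu : Integrable (fun ω => Real.exp (u ω)) μ)
    (hv : Integrable (fun ω => Real.exp (v ω)) μ)
    (hα : 0 ≤ α) (hβ : 0 ≤ β) (hαβ : α + β = 1) :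
    Integrable (fun ω => Real.exp (α * u ω + β * v ω)) μ := by
  have hum : AEMeasurable u μ := Real.aemeasurable_of_aemeasurable_exp hu.aemeasurable
  have hvm : AEMeasurable v μ := Real.aemeasurable_of_aemeasurable_exp hv.aemeasurable
  refine ((hu.const_mul α).add (hv.const_mul β)).mono' (by fun_prop) (ae_of_all _ fun ω => ?_)
  rw [Real.norm_eq_abs, Real.abs_exp]
  exact convexOn_exp.2 (mem_univ _) (mem_univ _) hα hβ hαβ

theorem integrable_exp_sub_const (hu : Integrable (fun ω => Real.exp (u ω)) μ) (c : ℝ) :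
    Integrable (fun ω => Real.exp (u ω - c)) μ := by
  simpa only [Real.exp_sub] using hu.div_const (Real.exp c)

theorem integral_exp_sub_const (u : Ω → ℝ) (c : ℝ) :
    ∫ ω, Real.exp (u ω - c) ∂μ = (∫ ω, Real.exp (u ω) ∂μ) / Real.exp c := by
  simp only [Real.exp_sub, integral_div]

theorem integral_exp_sub_log_integral_exp [NeZero μ]
    (hu : Integrable (fun ω => Real.exp (u ω)) μ) :
    ∫ ω, Real.exp (u ω - Real.log (∫ ω', Real.exp (u ω') ∂μ)) ∂μ = 1 := by
  have hpos := integral_exp_pos hu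
  rw [integral_exp_sub_const, Real.exp_log hpos, div_self hpos.ne']

theorem integral_exp_combo_lt_one (hu : Integrable (fun ω => Real.exp (u ω)) μ)
    (hv : Integrable (fun ω => Real.exp (v ω)) μ) (hu_one : ∫ ω, Real.exp (u ω) ∂μ = 1)
    (hv_one : ∫ ω, Real.exp (v ω) ∂μ = 1) (hne : ¬ u =ᵐ[μ] v)
    (hα : 0 < α) (hβ : 0 < β) (hαβ : α + β = 1) :
    ∫ ω, Real.exp (α * u ω + β * v ω) ∂μ < 1 :=
  calc ∫ ω, Real.exp (α * u ω + β * v ω) ∂μ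
      < α * ∫ ω, Real.exp (u ω) ∂μ + β * ∫ ω, Real.exp (v ω) ∂μ :=
        integral_comp_combo_lt_of_strictConvexOn strictConvexOn_exp
          (ae_of_all _ fun _ => mem_univ _) (ae_of_all _ fun _ => mem_univ _) hu hv
          (integrable_exp_combo hu hv hα.le hβ.le hαβ) hne hα hβ hαβ
    _ = 1 := by rw [hu_one, hv_one, mul_one, mul_one, hαβ]

theorem log_integral_exp_combo_lt (hu : Integrable (fun ω => Real.exp (u ω)) μ)
    (hv : Integrable (fun ω => Real.exp (v ω)) μ)
    (hnc : ∀ c : ℝ, ¬ ∀ᵐ ω ∂μ, u ω - v ω = c)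
    (hα : 0 < α) (hβ : 0 < β) (hαβ : α + β = 1) :
    Real.log (∫ ω, Real.exp (α * u ω + β * v ω) ∂μ)
      < α * Real.log (∫ ω, Real.exp (u ω) ∂μ) + β * Real.log (∫ ω, Real.exp (v ω) ∂μ) := by
  have : NeZero μ := ⟨fun hμ => hnc 0 (by simp [hμ])⟩
  set U := Real.log (∫ ω, Real.exp (u ω) ∂μ)
  set V := Real.log (∫ ω, Real.exp (v ω) ∂μ)
  have hne : ¬ (fun ω => u ω - U) =ᵐ[μ] fun ω => v ω - V := fun h =>
    hnc (U - V) (h.mono fun ω hω => by linarith)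
  have hlt : ∫ ω, Real.exp (α * (u ω - U) + β * (v ω - V)) ∂μ < 1 :=
    integral_exp_combo_lt_one (integrable_exp_sub_const hu U) (integrable_exp_sub_const hv V)
      (integral_exp_sub_log_integral_exp hu) (integral_exp_sub_log_integral_exp hv) hne hα hβ hαβ
  have hshift (ω : Ω) :
      α * (u ω - U) + β * (v ω - V) = α * u ω + β * v ω - (α * U + β * V) := by ring
  simp only [hshift, integral_exp_sub_const, div_lt_one (Real.exp_pos _)] at hlt
  have hpos := integral_exp_pos (integrable_exp_combo hu hv hα.le hβ.le hαβ)
  exact (Real.log_lt_iff_lt_exp hpos).2 hlt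

end ConvexCombination

theorem entropic_strict_convex_general (P : Measure Ω) (a : ℝ) (ha : 0 < a) (X₁ X₂ : Ω → ℝ)
    (hint₁ : Integrable (fun ω => Real.exp (-a * X₁ ω)) P)
    (hint₂ : Integrable (fun ω => Real.exp (-a * X₂ ω)) P)
    (hnc : ∀ c : ℝ, ¬ ∀ᵐ ω ∂P, X₁ ω - X₂ ω = c) :
    ∀ α ∈ Set.Ioo (0 : ℝ) 1,
      entropic P a (fun ω => α * X₁ ω + (1 - α) * X₂ ω)
        < α * entropic P a X₁ + (1 - α) * entropic P a X₂ := by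
  rintro α ⟨hα_pos, hα_lt⟩
  have hnc_smul (c : ℝ) : ¬ ∀ᵐ ω ∂P, -a * X₁ ω - -a * X₂ ω = c := fun h =>
    hnc (c / -a) (h.mono fun ω hω => by
      rw [eq_div_iff (neg_ne_zero.2 ha.ne')]
      linarith)
  have hlog := log_integral_exp_combo_lt hint₁ hint₂ hnc_smul hα_pos (sub_pos.2 hα_lt)
    (add_sub_cancel α 1)
  have hlin (ω : Ω) :
      -a * (α * X₁ ω + (1 - α) * X₂ ω) = α * (-a * X₁ ω) + (1 - α) * (-a * X₂ ω) := by ring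
  simp only [entropic, hlin]
  calc _ < 1 / a * (α * Real.log (∫ ω, Real.exp (-a * X₁ ω) ∂P)
          + (1 - α) * Real.log (∫ ω, Real.exp (-a * X₂ ω) ∂P)) :=
        mul_lt_mul_of_pos_left hlog (one_div_pos.2 ha)
    _ = _ := by ring

/-- strict convexity of the entropic risk measure `h_a` (`a ∈ (0,∞)`) for
random variables whose difference is not a.s. constant. -/
theorem entropic_strict_convex (P : Measure Ω) [IsProbabilityMeasure P]
    (a : ℝ) (ha : 0 < a) (X₁ X₂ : Ω → ℝ)
    (hmX₁ : Measurable X₁) (hmX₂ : Measurable X₂)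
    (hint₁ : Integrable (fun ω => Real.exp (-a * X₁ ω)) P)
    (hint₂ : Integrable (fun ω => Real.exp (-a * X₂ ω)) P)
    (hnc : ∀ c : ℝ, P {ω | X₁ ω - X₂ ω = c} < 1) :
    ∀ α ∈ Set.Ioo (0 : ℝ) 1,
      entropic P a (fun ω => α * X₁ ω + (1 - α) * X₂ ω)
        < α * entropic P a X₁ + (1 - α) * entropic P a X₂ :=
  entropic_strict_convex_general P a ha X₁ X₂ hint₁ hint₂ fun c hc =>
    (hnc c).ne ((measure_congr (eventuallyEq_univ.2 hc)).trans measure_univ)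
end
end

section
/- Let X₁, X₂ be real random variables such that h(X₁) and h(X₂) are finite. If X₁ − X₂ is not almost surely constant (i.e., ℙ(X₁ − X₂ = c) < 1 for every c ∈ ℝ), then for every α ∈ (0,1), h(αX₁ + (1−α)X₂) < α·h(X₁) + (1−α)·h(X₂). -/
/-!
Tilt `P` by `e^g`: writing `Y = e^{f-g}`, Jensen's inequality for the strictly concave function
`y ↦ y^α` under the tilted law gives `E[e^{αf + (1-α)g}] < E[e^f]^α E[e^g]^{1-α}` unless `Y` is a.s.
constant. With `f = -aX₁` and `g = -aX₂` this is the strict convexity of each entropic risk measure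
`h_a`. The strict inequality survives integration in `a` because `a ↦ h_a(X)` is continuous on
`[a₀, a₁]`, hence integrable: `e^{-aX}` is dominated by `e^{-a₀X} + e^{-a₁X}`.
-/

open MeasureTheory Filter Set
open scoped ENNReal

noncomputable section

variable {Ω : Type*} [MeasurableSpace Ω]

section LogIntegralExp

variable {μ : Measure Ω} {f g : Ω → ℝ} {α : ℝ}

lemma integrable_exp_convexComb (hf : Integrable (fun ω => Real.exp (f ω)) μ)
    (hg : Integrable (fun ω => Real.exp (g ω)) μ) (hα : α ∈ Icc (0 : ℝ) 1) :
    Integrable (fun ω => Real.exp (α * f ω + (1 - α) * g ω)) μ := by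
  have hfm : AEMeasurable f μ := Real.aemeasurable_of_aemeasurable_exp hf.aemeasurable
  have hgm : AEMeasurable g μ := Real.aemeasurable_of_aemeasurable_exp hg.aemeasurable
  refine ((hf.const_mul α).add (hg.const_mul (1 - α))).mono' (by fun_prop) (ae_of_all _ fun ω => ?_)
  rw [Real.norm_eq_abs, Real.abs_exp]
  exact convexOn_exp.2 (mem_univ _) (mem_univ _) hα.1 (sub_nonneg.2 hα.2) (add_sub_cancel _ _)

lemma integral_rpow_lt_rpow_integral [IsProbabilityMeasure μ] {Y : Ω → ℝ} (hY : 0 ≤ᵐ[μ] Y)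
    (hYi : Integrable Y μ) (hα : α ∈ Ioo (0 : ℝ) 1) (hYα : Integrable (fun ω => Y ω ^ α) μ)
    (hnc : ∀ c : ℝ, ¬ ∀ᵐ ω ∂μ, Y ω = c) :
    ∫ ω, Y ω ^ α ∂μ < (∫ ω, Y ω ∂μ) ^ α := by
  have hcont : ContinuousOn (fun y : ℝ => y ^ α) (Ici 0) :=
    (Real.continuous_rpow_const hα.1.le).continuousOn
  simpa only [average_eq_integral] using
    ((Real.strictConcaveOn_rpow hα.1 hα.2).ae_eq_const_or_lt_map_average hcont isClosed_Ici
      hY hYi hYα).resolve_left (hnc _)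

lemma log_integral_exp_convexComb_lt (hf : Integrable (fun ω => Real.exp (f ω)) μ)
    (hg : Integrable (fun ω => Real.exp (g ω)) μ) (hα : α ∈ Ioo (0 : ℝ) 1)
    (hnc : ∀ c : ℝ, ¬ ∀ᵐ ω ∂μ, f ω - g ω = c) :
    Real.log (∫ ω, Real.exp (α * f ω + (1 - α) * g ω) ∂μ)
      < α * Real.log (∫ ω, Real.exp (f ω) ∂μ) + (1 - α) * Real.log (∫ ω, Real.exp (g ω) ∂μ) := by
  have : NeZero μ := ⟨by rintro rfl; exact hnc 0 (by simp)⟩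
  have : IsProbabilityMeasure (μ.tilted g) := isProbabilityMeasure_tilted hg
  have hmix := integrable_exp_convexComb hf hg (Ioo_subset_Icc_self hα)
  have hexp₁ (ω : Ω) : g ω + (f ω - g ω) = f ω := by ring
  have hexpα (ω : Ω) : g ω + (f ω - g ω) * α = α * f ω + (1 - α) * g ω := by ring
  have hY : Integrable (fun ω => Real.exp (f ω - g ω)) (μ.tilted g) := by
    simpa only [integrable_tilted_iff hg, smul_eq_mul, ← Real.exp_add, hexp₁] using hf
  have hYα : Integrable (fun ω => Real.exp (f ω - g ω) ^ α) (μ.tilted g) := by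
    simpa only [integrable_tilted_iff hg, smul_eq_mul, ← Real.exp_mul, ← Real.exp_add, hexpα]
      using hmix
  have hY_nc (c : ℝ) : ¬ ∀ᵐ ω ∂μ.tilted g, Real.exp (f ω - g ω) = c := fun hc =>
    hnc (Real.log c) <| by
      filter_upwards [(absolutelyContinuous_tilted hg).ae_le hc] with ω hω
      rw [← hω, Real.log_exp]
  have hjensen := integral_rpow_lt_rpow_integral
    (ae_of_all _ fun ω => (Real.exp_pos (f ω - g ω)).le) hY hα hYα hY_nc
  simp only [← Real.exp_mul, integral_exp_tilted, Pi.add_apply, hexp₁, hexpα] at hjensen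
  have hA := integral_exp_pos hf
  have hB := integral_exp_pos hg
  have hlog := Real.log_lt_log (div_pos (integral_exp_pos hmix) hB) hjensen
  rw [Real.log_rpow (div_pos hA hB), Real.log_div (integral_exp_pos hmix).ne' hB.ne',
    Real.log_div hA.ne' hB.ne'] at hlog
  linarith

end LogIntegralExp

lemma exp_mul_le_exp_mul_add_exp_mul {s t u : ℝ} (hu : u ∈ Icc s t) (x : ℝ) :
    Real.exp (u * x) ≤ Real.exp (s * x) + Real.exp (t * x) := by
  rcases le_total 0 x with hx | hx
  · have : Real.exp (u * x) ≤ Real.exp (t * x) := by gcongr; exact hu.2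
    linarith [Real.exp_pos (s * x)]
  · have : Real.exp (u * x) ≤ Real.exp (s * x) :=
      Real.exp_le_exp.2 (mul_le_mul_of_nonpos_right hu.1 hx)
    linarith [Real.exp_pos (t * x)]

open ProbabilityTheory in
lemma continuousOn_mgf_Icc {μ : Measure Ω} {X : Ω → ℝ} {s t : ℝ}
    (hs : s ∈ integrableExpSet X μ) (ht : t ∈ integrableExpSet X μ) :
    ContinuousOn (mgf X μ) (Icc s t) := by
  refine continuousOn_of_dominated (fun u hu => ?_) (fun u hu => ae_of_all _ fun ω => ?_)
    (hs.add ht) (ae_of_all _ fun ω => by fun_prop)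
  · exact (integrable_exp_mul_of_le_of_le hs ht hu.1 hu.2).aestronglyMeasurable
  · rw [Real.norm_eq_abs, Real.abs_exp]
    exact exp_mul_le_exp_mul_add_exp_mul hu (X ω)

lemma setIntegral_lt_setIntegral {μ : Measure Ω} {s : Set Ω} {f g : Ω → ℝ} (hs : MeasurableSet s)
    (hμs : μ s ≠ 0) (hf : IntegrableOn f s μ) (hg : IntegrableOn g s μ)
    (hfg : ∀ x ∈ s, f x < g x) :
    ∫ x in s, f x ∂μ < ∫ x in s, g x ∂μ := by
  have hnonneg : 0 ≤ᵐ[μ.restrict s] fun x => g x - f x :=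
    ae_restrict_of_forall_mem hs fun x hx => sub_nonneg.2 (hfg x hx).le
  have hsupport : s ⊆ Function.support fun x => g x - f x := fun x hx => (sub_pos.2 (hfg x hx)).ne'
  rw [← sub_pos, ← integral_sub hg hf,
    setIntegral_pos_iff_support_of_nonneg_ae hnonneg (hg.sub hf), inter_eq_right.2 hsupport]
  exact pos_iff_ne_zero.2 hμs

lemma neg_mul_convexComb (a α x y : ℝ) :
    -a * (α * x + (1 - α) * y) = α * (-a * x) + (1 - α) * (-a * y) := by
  ring

lemma continuousOn_entropic {P : Measure Ω} [NeZero P] {X : Ω → ℝ} {a₀ a₁ : ℝ} (ha₀ : 0 < a₀)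
    (hint₀ : Integrable (fun ω => Real.exp (-a₀ * X ω)) P)
    (hint₁ : Integrable (fun ω => Real.exp (-a₁ * X ω)) P) :
    ContinuousOn (fun a => entropic P a X) (Icc a₀ a₁) := by
  have hcont : ContinuousOn (fun a => ∫ ω, Real.exp (-a * X ω) ∂P) (Icc a₀ a₁) :=
    (continuousOn_mgf_Icc hint₁ hint₀).comp continuousOn_neg
      fun a ha => ⟨neg_le_neg ha.2, neg_le_neg ha.1⟩
  have hpos : ∀ a ∈ Icc a₀ a₁, ∫ ω, Real.exp (-a * X ω) ∂P ≠ 0 := fun a ha =>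
    (integral_exp_pos (ProbabilityTheory.integrable_exp_mul_of_le_of_le hint₁ hint₀
      (neg_le_neg ha.2) (neg_le_neg ha.1))).ne'
  exact (continuousOn_const.div continuousOn_id fun a ha => (ha₀.trans_le ha.1).ne').mul
    (hcont.log hpos)

lemma entropic_convexComb_lt {P : Measure Ω} {X₁ X₂ : Ω → ℝ} {a α : ℝ} (ha : 0 < a)
    (hint₁ : Integrable (fun ω => Real.exp (-a * X₁ ω)) P)
    (hint₂ : Integrable (fun ω => Real.exp (-a * X₂ ω)) P)
    (hnc : ∀ c : ℝ, ¬ ∀ᵐ ω ∂P, X₁ ω - X₂ ω = c) (hα : α ∈ Ioo (0 : ℝ) 1) :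
    entropic P a (fun ω => α * X₁ ω + (1 - α) * X₂ ω)
      < α * entropic P a X₁ + (1 - α) * entropic P a X₂ := by
  have hnc' (c : ℝ) : ¬ ∀ᵐ ω ∂P, -a * X₁ ω - -a * X₂ ω = c := fun hc =>
    hnc (c / -a) <| by
      filter_upwards [hc] with ω hω
      rw [eq_div_iff (neg_ne_zero.2 ha.ne'), ← hω]
      ring
  have hlt := log_integral_exp_convexComb_lt hint₁ hint₂ hα hnc'
  simp only [entropic, neg_mul_convexComb]
  linear_combination 1 / a * hlt

theorem werm_strict_convex_general (P : Measure Ω) (a₀ a₁ : ℝ) (ha₀ : 0 < a₀)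
    (m : Measure ℝ) [IsFiniteMeasureOnCompacts m] (hm : m (Icc a₀ a₁) ≠ 0) (X₁ X₂ : Ω → ℝ)
    (hint₁ : ∀ a ∈ Icc a₀ a₁, Integrable (fun ω => Real.exp (-a * X₁ ω)) P)
    (hint₂ : ∀ a ∈ Icc a₀ a₁, Integrable (fun ω => Real.exp (-a * X₂ ω)) P)
    (hnc : ∀ c : ℝ, ¬ ∀ᵐ ω ∂P, X₁ ω - X₂ ω = c) :
    ∀ α ∈ Ioo (0 : ℝ) 1,
      werm P m a₀ a₁ (fun ω => α * X₁ ω + (1 - α) * X₂ ω)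
        < α * werm P m a₀ a₁ X₁ + (1 - α) * werm P m a₀ a₁ X₂ := by
  intro α hα
  have : NeZero P := ⟨by rintro rfl; exact hnc 0 (by simp)⟩
  have ha₀₁ : a₀ ≤ a₁ := nonempty_Icc.1 (nonempty_of_measure_ne_zero hm)
  have hintm {X : Ω → ℝ} (hint : ∀ a ∈ Icc a₀ a₁, Integrable (fun ω => Real.exp (-a * X ω)) P) :
      IntegrableOn (fun a => entropic P a X) (Icc a₀ a₁) m :=
    (continuousOn_entropic ha₀ (hint a₀ (left_mem_Icc.2 ha₀₁))
      (hint a₁ (right_mem_Icc.2 ha₀₁))).integrableOn_compact isCompact_Icc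
  have hint : ∀ a ∈ Icc a₀ a₁,
      Integrable (fun ω => Real.exp (-a * (α * X₁ ω + (1 - α) * X₂ ω))) P := fun a ha => by
    simpa only [neg_mul_convexComb] using
      integrable_exp_convexComb (hint₁ a ha) (hint₂ a ha) (Ioo_subset_Icc_self hα)
  have hi₁ := (hintm hint₁).const_mul α
  have hi₂ := (hintm hint₂).const_mul (1 - α)
  calc werm P m a₀ a₁ (fun ω => α * X₁ ω + (1 - α) * X₂ ω)
      < ∫ a in Icc a₀ a₁, (α * entropic P a X₁ + (1 - α) * entropic P a X₂) ∂m :=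
        setIntegral_lt_setIntegral measurableSet_Icc hm (hintm hint) (hi₁.add hi₂) fun a ha =>
          entropic_convexComb_lt (ha₀.trans_le ha.1) (hint₁ a ha) (hint₂ a ha) hnc hα
    _ = α * werm P m a₀ a₁ X₁ + (1 - α) * werm P m a₀ a₁ X₂ := by
        rw [integral_add hi₁ hi₂, integral_const_mul, integral_const_mul, werm, werm]

/-- strict convexity of the weighted entropic risk measure `h` for random
variables whose difference is not a.s. constant, assuming `h(X₁)` and `h(X₂)` are finite
(i.e. all the defining integrals exist). -/
theorem werm_strict_convex (P : Measure Ω) [IsProbabilityMeasure P]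
    (a₀ a₁ : ℝ) (ha₀ : 0 < a₀) (ha₀₁ : a₀ < a₁)
    (m : Measure ℝ) [IsProbabilityMeasure m] (hm : m (Set.Icc a₀ a₁) = 1)
    (X₁ X₂ : Ω → ℝ) (hmX₁ : Measurable X₁) (hmX₂ : Measurable X₂)
    (hint₁ : ∀ a ∈ Set.Icc a₀ a₁, Integrable (fun ω => Real.exp (-a * X₁ ω)) P)
    (hint₂ : ∀ a ∈ Set.Icc a₀ a₁, Integrable (fun ω => Real.exp (-a * X₂ ω)) P)
    (hintm₁ : IntegrableOn (fun a => entropic P a X₁) (Set.Icc a₀ a₁) m)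
    (hintm₂ : IntegrableOn (fun a => entropic P a X₂) (Set.Icc a₀ a₁) m)
    (hnc : ∀ c : ℝ, P {ω | X₁ ω - X₂ ω = c} < 1) :
    ∀ α ∈ Set.Ioo (0 : ℝ) 1,
      werm P m a₀ a₁ (fun ω => α * X₁ ω + (1 - α) * X₂ ω)
        < α * werm P m a₀ a₁ X₁ + (1 - α) * werm P m a₀ a₁ X₂ :=
  werm_strict_convex_general P a₀ a₁ ha₀ m (hm ▸ one_ne_zero) X₁ X₂ hint₁ hint₂ fun c hc =>
    (hnc c).ne <| by rw [measure_congr (eventuallyEq_univ.2 hc), measure_univ]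
end
end

section
/- Let {Xₙ, n ≥ 1} be a sequence of real random variables with Xₙ ≥ 0 a.s. for every n, converging in probability (in measure) to a real random variable X with X ≥ 0 a.s. Then lim_{n→∞} h(Xₙ) = h(X). -/
/-!
Convergence in distribution suffices, and it passes to `E[e^{-aXₙ}] → E[e^{-aX}]` for each fixed
`a > 0`, because on a half-line `[c, ∞)` carrying all the laws the function `x ↦ e^{-ax}` is bounded
and continuous. Hence the entropic risk `h_a(Xₙ)` converges for each `a`.

By Jensen's inequality `a ↦ h_a(Xₙ)` is nondecreasing, so on `[a₀, a₁]` it is squeezed between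
`h_{a₀}(Xₙ)` and `h_{a₁}(Xₙ)`. Both ends converge, hence are eventually bounded, and dominated
convergence carries the limit through the integral over `a`.
-/

open MeasureTheory Filter Set
open scoped ENNReal

noncomputable section

variable {Ω : Type*} [MeasurableSpace Ω]

section ExponentialMoments

open ProbabilityTheory

lemma integrable_exp_mul_of_nonpos_of_ae_le {P : Measure Ω} [IsFiniteMeasure P] {X : Ω → ℝ}
    {c t : ℝ} (ht : t ≤ 0) (hX : AEMeasurable X P) (hc : ∀ᵐ ω ∂P, c ≤ X ω) :
    Integrable (fun ω => Real.exp (t * X ω)) P := by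
  simpa only [Pi.neg_apply, neg_mul_neg] using integrable_exp_mul_of_le (-t) (-c)
    (neg_nonneg.2 ht) hX.neg (hc.mono fun ω => neg_le_neg)

lemma mgf_rpow_le_mgf_mul {P : Measure Ω} [IsProbabilityMeasure P] {X : Ω → ℝ} {p t : ℝ}
    (hp : 1 ≤ p) (hint : Integrable (fun ω => Real.exp (p * t * X ω)) P) :
    mgf X P t ^ p ≤ mgf X P (p * t) := by
  have hexp : ∀ ω, Real.exp (t * X ω) ^ p = Real.exp (p * t * X ω) := fun ω => by
    rw [← Real.exp_mul, mul_right_comm, mul_comm p t, mul_right_comm]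
  by_cases ht : Integrable (fun ω => Real.exp (t * X ω)) P
  · have hjensen := (convexOn_rpow hp).map_integral_le
      (Real.continuous_rpow_const (zero_le_one.trans hp)).continuousOn isClosed_Ici
      (Eventually.of_forall fun ω => (Real.exp_pos (t * X ω)).le) ht
      (by simpa only [Function.comp_def, hexp] using hint)
    simpa only [mgf, hexp] using hjensen
  · rw [mgf_undef ht, Real.zero_rpow (zero_lt_one.trans_le hp).ne']
    exact mgf_nonneg

end ExponentialMoments

section EntropicMonotone

open ProbabilityTheory

lemma entropic_eq_cgf_div (P : Measure Ω) (a : ℝ) (X : Ω → ℝ) :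
    entropic P a X = cgf X P (-a) / a :=
  one_div_mul_eq_div a _

variable {P : Measure Ω} [IsProbabilityMeasure P] {X : Ω → ℝ}

lemma entropic_le_entropic {a b : ℝ} (ha : 0 < a) (hab : a ≤ b)
    (hint : Integrable (fun ω => Real.exp (-b * X ω)) P) :
    entropic P a X ≤ entropic P b X := by
  have hpos : 0 < mgf X P (-a) := mgf_pos
    (integrable_exp_mul_of_nonpos_of_ge hint (neg_nonpos.2 ha.le) (neg_le_neg hab))
  have hmul : b / a * -a = -b := by field_simp
  have hmgf : mgf X P (-a) ^ (b / a) ≤ mgf X P (-b) := by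
    rw [← hmul] at hint ⊢
    exact mgf_rpow_le_mgf_mul ((one_le_div ha).2 hab) hint
  have hcgf : b / a * cgf X P (-a) ≤ cgf X P (-b) := by
    rw [cgf, ← Real.log_rpow hpos]
    exact Real.log_le_log (Real.rpow_pos_of_pos hpos _) hmgf
  rw [entropic_eq_cgf_div, entropic_eq_cgf_div, le_div_iff₀ (ha.trans_le hab)]
  calc cgf X P (-a) / a * b = b / a * cgf X P (-a) := by ring
    _ ≤ cgf X P (-b) := hcgf

lemma monotoneOn_entropic {c : ℝ} (hX : AEMeasurable X P) (hc : ∀ᵐ ω ∂P, c ≤ X ω) :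
    MonotoneOn (fun a => entropic P a X) (Ioi 0) := fun _ ha _ hb hab =>
  entropic_le_entropic ha hab
    (integrable_exp_mul_of_nonpos_of_ae_le (neg_nonpos.2 (le_of_lt hb)) hX hc)

end EntropicMonotone

section ConvergenceInDistribution

open ProbabilityTheory

variable {ι : Type*} {Ωs : ι → Type*} {l : Filter ι} [∀ i, MeasurableSpace (Ωs i)]
  {Ps : ∀ i, Measure (Ωs i)} [∀ i, IsProbabilityMeasure (Ps i)]
  {P : Measure Ω} [IsProbabilityMeasure P]

section WeakLimits

variable {E : Type*} [TopologicalSpace E] [MeasurableSpace E] [OpensMeasurableSpace E]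
  {Xs : ∀ i, Ωs i → E} {X : Ω → E}

lemma tendsto_integral_comp_of_tendstoInDistribution (h : TendstoInDistribution Xs l X Ps P)
    (f : BoundedContinuousFunction E ℝ) :
    Tendsto (fun i => ∫ ω, f (Xs i ω) ∂Ps i) l (nhds (∫ ω, f (X ω) ∂P)) := by
  have hf : Measurable f := f.continuous.measurable
  have hlim := ProbabilityMeasure.tendsto_iff_forall_integral_tendsto.1 h.tendsto f
  simpa only [ProbabilityMeasure.coe_mk, integral_map (h.forall_aemeasurable _)
    hf.aestronglyMeasurable, integral_map h.aemeasurable_limit hf.aestronglyMeasurable] using hlim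

lemma ae_mem_of_tendstoInDistribution [HasOuterApproxClosed E] [l.NeBot]
    (h : TendstoInDistribution Xs l X Ps P) {F : Set E} (hF : IsClosed F)
    (hXs : ∀ i, ∀ᵐ ω ∂Ps i, Xs i ω ∈ F) : ∀ᵐ ω ∂P, X ω ∈ F := by
  have hlaw : ∀ i, (Ps i).map (Xs i) F = 1 := fun i => by
    have := Measure.isProbabilityMeasure_map (h.forall_aemeasurable i)
    exact (mem_ae_iff_prob_eq_one hF.measurableSet).1
      ((mem_ae_map_iff (h.forall_aemeasurable i) hF.measurableSet).2 (hXs i))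
  have hlimsup := ProbabilityMeasure.limsup_measure_closed_le_of_tendsto h.tendsto hF
  simp only [ProbabilityMeasure.coe_mk, hlaw, limsup_const] at hlimsup
  have := Measure.isProbabilityMeasure_map h.aemeasurable_limit
  exact (mem_ae_map_iff h.aemeasurable_limit hF.measurableSet).1
    ((mem_ae_iff_prob_eq_one hF.measurableSet).2 (prob_le_one.antisymm hlimsup))

end WeakLimits

variable [l.NeBot] {Xs : ∀ i, Ωs i → ℝ} {X : Ω → ℝ} {c : ℝ}

lemma tendsto_mgf_of_tendstoInDistribution {t : ℝ} (ht : t ≤ 0)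
    (h : TendstoInDistribution Xs l X Ps P) (hc : ∀ i, ∀ᵐ ω ∂Ps i, c ≤ Xs i ω) :
    Tendsto (fun i => mgf (Xs i) (Ps i) t) l (nhds (mgf X P t)) := by
  let f : BoundedContinuousFunction ℝ ℝ := .ofNormedAddCommGroup
    (fun x => Real.exp (t * max c x)) (by fun_prop) (Real.exp (t * c)) fun x => by
      rw [Real.norm_eq_abs, Real.abs_exp, Real.exp_le_exp]
      exact mul_le_mul_of_nonpos_left (le_max_left c x) ht
  have hf : ∀ {x}, c ≤ x → f x = Real.exp (t * x) := fun hx =>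
    congrArg (fun y => Real.exp (t * y)) (max_eq_right hx)
  have hXc : ∀ᵐ ω ∂P, c ≤ X ω := ae_mem_of_tendstoInDistribution h isClosed_Ici hc
  have hlim := tendsto_integral_comp_of_tendstoInDistribution h f
  rw [integral_congr_ae (hXc.mono fun ω => hf)] at hlim
  exact hlim.congr fun i => integral_congr_ae ((hc i).mono fun ω => hf)

lemma tendsto_entropic_of_tendstoInDistribution {a : ℝ} (ha : 0 < a)
    (h : TendstoInDistribution Xs l X Ps P) (hc : ∀ i, ∀ᵐ ω ∂Ps i, c ≤ Xs i ω) :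
    Tendsto (fun i => entropic (Ps i) a (Xs i)) l (nhds (entropic P a X)) := by
  have ha' : -a ≤ 0 := neg_nonpos.2 ha.le
  have hXc : ∀ᵐ ω ∂P, c ≤ X ω := ae_mem_of_tendstoInDistribution h isClosed_Ici hc
  have hpos : 0 < mgf X P (-a) :=
    mgf_pos (integrable_exp_mul_of_nonpos_of_ae_le ha' h.aemeasurable_limit hXc)
  have hcgf : Tendsto (fun i => cgf (Xs i) (Ps i) (-a)) l (nhds (cgf X P (-a))) :=
    (tendsto_mgf_of_tendstoInDistribution ha' h hc).log hpos.ne'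
  simpa only [entropic_eq_cgf_div] using hcgf.div_const a

theorem werm_continuous_in_probability_general [l.IsCountablyGenerated] {a₀ a₁ : ℝ}
    (ha₀ : 0 < a₀) (ha₀₁ : a₀ ≤ a₁) (m : Measure ℝ) [IsFiniteMeasureOnCompacts m]
    (h : TendstoInDistribution Xs l X Ps P) (hc : ∀ i, ∀ᵐ ω ∂Ps i, c ≤ Xs i ω) :
    Tendsto (fun i => werm (Ps i) m a₀ a₁ (Xs i)) l (nhds (werm P m a₀ a₁ X)) := by
  have hlim : ∀ a ∈ Icc a₀ a₁,
      Tendsto (fun i => entropic (Ps i) a (Xs i)) l (nhds (entropic P a X)) := fun a ha =>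
    tendsto_entropic_of_tendstoInDistribution (ha₀.trans_le ha.1) h hc
  have hmono : ∀ i, MonotoneOn (fun a => entropic (Ps i) a (Xs i)) (Icc a₀ a₁) := fun i =>
    (monotoneOn_entropic (h.forall_aemeasurable i) (hc i)).mono fun _ ha => ha₀.trans_le ha.1
  have ha₀_mem : a₀ ∈ Icc a₀ a₁ := left_mem_Icc.2 ha₀₁
  have ha₁_mem : a₁ ∈ Icc a₀ a₁ := right_mem_Icc.2 ha₀₁
  obtain ⟨C, hC⟩ := ((hlim a₀ ha₀_mem).abs.max (hlim a₁ ha₁_mem).abs).isBoundedUnder_le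
  refine tendsto_integral_filter_of_dominated_convergence (fun _ => C) ?_ ?_
    (integrableOn_const isCompact_Icc.measure_ne_top) ?_
  · exact Eventually.of_forall fun i =>
      (aemeasurable_restrict_of_monotoneOn measurableSet_Icc (hmono i)).aestronglyMeasurable
  · filter_upwards [hC] with i hi
    filter_upwards [ae_restrict_mem measurableSet_Icc] with a ha
    exact (abs_le_max_abs_abs (hmono i ha₀_mem ha ha.1) (hmono i ha ha₁_mem ha.2)).trans hi
  · filter_upwards [ae_restrict_mem measurableSet_Icc] with a ha using hlim a ha

end ConvergenceInDistribution

/-- continuity of the WERM with respect to convergence in probability of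
nonnegative random variables: `h(Xₙ) → h(X)`. -/
theorem werm_continuous_in_probability (P : Measure Ω) [IsProbabilityMeasure P]
    (a₀ a₁ : ℝ) (ha₀ : 0 < a₀) (ha₀₁ : a₀ < a₁)
    (m : Measure ℝ) [IsProbabilityMeasure m] (hm : m (Set.Icc a₀ a₁) = 1)
    (Xn : ℕ → Ω → ℝ) (X : Ω → ℝ)
    (hmXn : ∀ n, Measurable (Xn n)) (hmX : Measurable X)
    (hXn0 : ∀ n, ∀ᵐ ω ∂P, 0 ≤ Xn n ω) (hX0 : ∀ᵐ ω ∂P, 0 ≤ X ω)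
    (hconv : TendstoInMeasure P Xn atTop X) :
    Tendsto (fun n => werm P m a₀ a₁ (Xn n)) atTop (nhds (werm P m a₀ a₁ X)) := by
  exact werm_continuous_in_probability_general ha₀ ha₀₁.le m
    (hconv.tendstoInDistribution fun n => (hmXn n).aemeasurable) hXn0
end
end

section
/- For every x > 0, the risk minimization problem minimize h(X) over X ∈ 𝒳(x) has a solution, and the solution is unique up to almost sure equality: if X₁* and X₂* both attain the minimal value, then X₁* = X₂* a.s. -/
/-!
Write `B = E[e^{-a(X+Y)/2}]`, `A = E[e^{-aX}]`, `C = E[e^{-aY}]`. Expanding the square of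
`s e^{-aX/2} - r e^{-aY/2}` gives
`E[(s e^{-aX/2} - r e^{-aY/2})²] = s² A + r² C - 2 s r B`, and this identity is used twice.

*Uniqueness.* For `s = B`, `r = A` the right-hand side is `A (A C - B²)`. Hence every entropic risk
measure is midpoint convex, with equality only for payoffs that differ by a constant. Two minimizers
of `h` have no convexity defect, so they differ by a constant, which vanishes by cash invariance.

*Existence.* Minimize `h` first and then `E[e^{-X}]` among near-minimizers of `h`. For a sequence
of such payoffs the identity with `s = r = 1`, `a = 1` shows that `e^{-Xₙ/2}` is Cauchy in `L²`, so
a subsequence converges a.s. By Fatou's lemma the budget keeps the limit of `Xₙ` finite and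
feasible. Jensen's inequality with the weight `min ρ 1` bounds the entropic risk measures uniformly
over the feasible set, so that `h` is bounded below and dominated convergence applies.
-/

open MeasureTheory Filter Set
open scoped ENNReal

noncomputable section

variable {Ω : Type*} [MeasurableSpace Ω]

open ProbabilityTheory
open scoped Topology

section MomentGeneratingFunction

variable {μ : Measure Ω} {X Y : Ω → ℝ} {t : ℝ}

lemma midpoint_fun_apply {α : Type*} (f g : α → ℝ) (i : α) :
    midpoint ℝ f g i = (f i + g i) / 2 := by
  simp only [midpoint_eq_smul_add, Pi.smul_apply, Pi.add_apply, invOf_eq_inv, smul_eq_mul]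
  ring

lemma exp_mul_midpoint {α : Type*} (t : ℝ) (f g : α → ℝ) (i : α) :
    Real.exp (t * midpoint ℝ f g i) = Real.exp (t * f i / 2) * Real.exp (t * g i / 2) := by
  rw [midpoint_fun_apply, ← Real.exp_add]
  ring_nf

lemma sq_exp_half (x : ℝ) : Real.exp (x / 2) ^ 2 = Real.exp x := by
  rw [Real.exp_half, Real.sq_sqrt (Real.exp_pos x).le]

lemma memLp_two_exp_half (hX : Integrable (fun ω => Real.exp (t * X ω)) μ) :
    MemLp (fun ω => Real.exp (t * X ω / 2)) 2 μ := by
  have hmeas : AEStronglyMeasurable (fun ω => Real.exp (t * X ω / 2)) μ := by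
    simpa only [Real.exp_half] using Real.continuous_sqrt.comp_aestronglyMeasurable hX.1
  exact (memLp_two_iff_integrable_sq hmeas).2 (by simpa only [sq_exp_half] using hX)

lemma integrable_exp_mul_midpoint (hX : Integrable (fun ω => Real.exp (t * X ω)) μ)
    (hY : Integrable (fun ω => Real.exp (t * Y ω)) μ) :
    Integrable (fun ω => Real.exp (t * midpoint ℝ X Y ω)) μ := by
  simp only [exp_mul_midpoint]
  exact (memLp_two_exp_half hX).integrable_mul (memLp_two_exp_half hY)

lemma integral_sq_sub_exp_half (hX : Integrable (fun ω => Real.exp (t * X ω)) μ)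
    (hY : Integrable (fun ω => Real.exp (t * Y ω)) μ) (s r : ℝ) :
    ∫ ω, (s * Real.exp (t * X ω / 2) - r * Real.exp (t * Y ω / 2)) ^ 2 ∂μ =
      s ^ 2 * mgf X μ t + r ^ 2 * mgf Y μ t - 2 * s * r * mgf (midpoint ℝ X Y) μ t := by
  have expand : ∀ ω, (s * Real.exp (t * X ω / 2) - r * Real.exp (t * Y ω / 2)) ^ 2 =
      s ^ 2 * Real.exp (t * X ω) + r ^ 2 * Real.exp (t * Y ω)
        - 2 * s * r * Real.exp (t * midpoint ℝ X Y ω) := fun ω => by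
    rw [← sq_exp_half (t * X ω), ← sq_exp_half (t * Y ω), exp_mul_midpoint]
    ring
  have hXs := hX.const_mul (s ^ 2)
  have hYr := hY.const_mul (r ^ 2)
  have hXYsr := (integrable_exp_mul_midpoint hX hY).const_mul (2 * s * r)
  simp only [expand, mgf]
  rw [integral_sub (by exact hXs.add hYr) hXYsr, integral_add hXs hYr, integral_const_mul,
    integral_const_mul, integral_const_mul]

lemma mgf_midpoint_le (hX : Integrable (fun ω => Real.exp (t * X ω)) μ)
    (hY : Integrable (fun ω => Real.exp (t * Y ω)) μ) :
    mgf (midpoint ℝ X Y) μ t ≤ (mgf X μ t + mgf Y μ t) / 2 := by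
  have hdefect := integral_sq_sub_exp_half hX hY 1 1
  have hnonneg : 0 ≤ ∫ ω, (1 * Real.exp (t * X ω / 2) - 1 * Real.exp (t * Y ω / 2)) ^ 2 ∂μ :=
    integral_nonneg fun _ => sq_nonneg _
  linarith

lemma integral_sq_mgf_midpoint_defect (hX : Integrable (fun ω => Real.exp (t * X ω)) μ)
    (hY : Integrable (fun ω => Real.exp (t * Y ω)) μ) :
    ∫ ω, (mgf (midpoint ℝ X Y) μ t * Real.exp (t * X ω / 2)
        - mgf X μ t * Real.exp (t * Y ω / 2)) ^ 2 ∂μ =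
      mgf X μ t * (mgf X μ t * mgf Y μ t - mgf (midpoint ℝ X Y) μ t ^ 2) := by
  rw [integral_sq_sub_exp_half hX hY]
  ring

/-- This is Jensen's inequality for the probability density `w / ∫ w`; the tangent line of `exp` at
the mean of `t * X` under it gives a bound that survives multiplication by `w ≤ 1`. -/
lemma integral_mul_exp_le_mgf {w : Ω → ℝ} (hX : Integrable (fun ω => Real.exp (t * X ω)) μ)
    (hw_nonneg : ∀ᵐ ω ∂μ, 0 ≤ w ω) (hw_le_one : ∀ᵐ ω ∂μ, w ω ≤ 1) (hw : Integrable w μ)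
    (hwX : Integrable (fun ω => w ω * X ω) μ) (hr : ∫ ω, w ω ∂μ ≠ 0) :
    (∫ ω, w ω ∂μ) * Real.exp (t * (∫ ω, w ω * X ω ∂μ) / ∫ ω, w ω ∂μ) ≤ mgf X μ t := by
  set r := ∫ ω, w ω ∂μ
  set c := t * (∫ ω, w ω * X ω ∂μ) / r with hc
  have tangent : ∀ᵐ ω ∂μ, Real.exp c * ((1 - c) * w ω + t * (w ω * X ω)) ≤
      Real.exp (t * X ω) := by
    filter_upwards [hw_nonneg, hw_le_one] with ω h0 h1
    calc Real.exp c * ((1 - c) * w ω + t * (w ω * X ω))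
        = w ω * (Real.exp c * (t * X ω - c + 1)) := by ring
      _ ≤ w ω * (Real.exp c * Real.exp (t * X ω - c)) := by
        gcongr
        exact Real.add_one_le_exp _
      _ = w ω * Real.exp (t * X ω) := by rw [← Real.exp_add, add_sub_cancel]
      _ ≤ Real.exp (t * X ω) := mul_le_of_le_one_left (Real.exp_pos _).le h1
  have hint := (hw.const_mul (1 - c)).add (hwX.const_mul t)
  calc r * Real.exp c = Real.exp c * ((1 - c) * r + t * ∫ ω, w ω * X ω ∂μ) := by
        rw [hc]
        field_simp
        ring
    _ = ∫ ω, Real.exp c * ((1 - c) * w ω + t * (w ω * X ω)) ∂μ := by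
        rw [integral_const_mul, integral_add (hw.const_mul _) (hwX.const_mul _),
          integral_const_mul, integral_const_mul]
    _ ≤ mgf X μ t := integral_mono_ae (hint.const_mul _) hX tangent

variable [NeZero μ]

lemma cgf_midpoint_le (hX : Integrable (fun ω => Real.exp (t * X ω)) μ)
    (hY : Integrable (fun ω => Real.exp (t * Y ω)) μ) :
    cgf (midpoint ℝ X Y) μ t ≤ (cgf X μ t + cgf Y μ t) / 2 := by
  have hsq : mgf (midpoint ℝ X Y) μ t ^ 2 ≤ mgf X μ t * mgf Y μ t :=
    sub_nonneg.1 <| nonneg_of_mul_nonneg_right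
      (integral_sq_mgf_midpoint_defect hX hY ▸ integral_nonneg fun _ => sq_nonneg _)
      (mgf_pos_iff.2 hX)
  rw [← exp_cgf hX, ← exp_cgf hY, ← exp_cgf (integrable_exp_mul_midpoint hX hY), ← Real.exp_add,
    ← Real.exp_nat_mul, Real.exp_le_exp] at hsq
  push_cast at hsq
  linarith

lemma exists_ae_eq_add_const_of_cgf_midpoint_eq (ht : t ≠ 0)
    (hX : Integrable (fun ω => Real.exp (t * X ω)) μ)
    (hY : Integrable (fun ω => Real.exp (t * Y ω)) μ)
    (h : cgf (midpoint ℝ X Y) μ t = (cgf X μ t + cgf Y μ t) / 2) :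
    ∃ c, X =ᵐ[μ] fun ω => Y ω + c := by
  have hXY := integrable_exp_mul_midpoint hX hY
  have hsq : mgf (midpoint ℝ X Y) μ t ^ 2 = mgf X μ t * mgf Y μ t := by
    rw [← exp_cgf hX, ← exp_cgf hY, ← exp_cgf hXY, h, ← Real.exp_nat_mul, ← Real.exp_add]
    push_cast
    ring_nf
  have hzero := integral_sq_mgf_midpoint_defect hX hY
  rw [hsq, sub_self, mul_zero, integral_eq_zero_iff_of_nonneg (fun _ => sq_nonneg _)
    (by exact (((memLp_two_exp_half hX).const_mul _).sub
      ((memLp_two_exp_half hY).const_mul _)).integrable_sq)] at hzero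
  refine ⟨2 * (cgf X μ t - cgf (midpoint ℝ X Y) μ t) / t, ?_⟩
  filter_upwards [hzero] with ω hω
  have hexp := sub_eq_zero.1 (pow_eq_zero_iff two_ne_zero |>.1 hω)
  rw [← exp_cgf hX, ← exp_cgf hXY, ← Real.exp_add, ← Real.exp_add, Real.exp_eq_exp] at hexp
  field_simp
  linarith

end MomentGeneratingFunction

section Entropic

variable {P : Measure Ω} {X Y : Ω → ℝ} {a : ℝ}

lemma entropic_eq_cgf (P : Measure Ω) (a : ℝ) (X : Ω → ℝ) :
    entropic P a X = (1 / a) * cgf X P (-a) := rfl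

lemma lpos_midpoint (hX : Lpos P X) (hY : Lpos P Y) : Lpos P (midpoint ℝ X Y) := by
  simp only [Lpos, funext (midpoint_fun_apply X Y)]
  refine ⟨(hX.1.add hY.1).div_const 2, ?_⟩
  filter_upwards [hX.2, hY.2] with ω hXω hYω
  positivity

lemma Lpos.integrable_exp_neg_mul [IsFiniteMeasure P] (hX : Lpos P X) (ha : 0 ≤ a) :
    Integrable (fun ω => Real.exp (-a * X ω)) P := by
  simpa using integrable_exp_mul_of_le a 0 ha hX.1.neg.aemeasurable
    (hX.2.mono fun ω hω => neg_nonpos.2 hω)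

lemma Lpos.mgf_neg_le_one [IsProbabilityMeasure P] (hX : Lpos P X) (ha : 0 ≤ a) :
    mgf X P (-a) ≤ 1 := by
  calc mgf X P (-a) ≤ mgf 0 P (-a) :=
        mgf_anti_of_nonpos hX.2 (neg_nonpos.2 ha) (by simp)
    _ = 1 := by simp

variable [IsFiniteMeasure P] [NeZero P]

lemma Lpos.entropic_midpoint_le (hX : Lpos P X) (hY : Lpos P Y) (ha : 0 < a) :
    entropic P a (midpoint ℝ X Y) ≤ (entropic P a X + entropic P a Y) / 2 := by
  have hcgf := cgf_midpoint_le (hX.integrable_exp_neg_mul ha.le) (hY.integrable_exp_neg_mul ha.le)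
  simp only [entropic_eq_cgf]
  linarith [mul_le_mul_of_nonneg_left hcgf (one_div_pos.2 ha).le]

lemma Lpos.exists_ae_eq_add_const_of_entropic_midpoint_eq (hX : Lpos P X) (hY : Lpos P Y)
    (ha : 0 < a) (h : entropic P a (midpoint ℝ X Y) = (entropic P a X + entropic P a Y) / 2) :
    ∃ c, X =ᵐ[P] fun ω => Y ω + c := by
  refine exists_ae_eq_add_const_of_cgf_midpoint_eq (neg_ne_zero.2 ha.ne')
    (hX.integrable_exp_neg_mul ha.le) (hY.integrable_exp_neg_mul ha.le) ?_
  simp only [entropic_eq_cgf] at h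
  field_simp at h
  linarith

lemma Lpos.entropic_add_const (hX : Lpos P X) (ha : 0 < a) (c : ℝ) :
    entropic P a (fun ω => X ω + c) = entropic P a X - c := by
  have hpos := mgf_pos_iff.2 (hX.integrable_exp_neg_mul ha.le)
  rw [entropic_eq_cgf, entropic_eq_cgf, cgf, mgf_add_const, Real.log_mul hpos.ne'
    (Real.exp_ne_zero _), Real.log_exp, cgf]
  field_simp
  ring

lemma Lpos.continuousOn_entropic (hX : Lpos P X) :
    ContinuousOn (fun a => entropic P a X) (Ioi 0) := by
  have hsub : Iio 0 ⊆ interior (integrableExpSet X P) :=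
    interior_maximal (fun t (ht : t < 0) => by
      simpa [integrableExpSet] using hX.integrable_exp_neg_mul (neg_nonneg.2 ht.le)) isOpen_Iio
  have hmgf : ContinuousOn (fun a => mgf X P (-a)) (Ioi 0) :=
    continuousOn_mgf.comp continuousOn_neg fun a ha => hsub (mem_Iio.2 (neg_lt_zero.2 ha))
  have hlog : ContinuousOn (fun a => cgf X P (-a)) (Ioi 0) :=
    hmgf.log fun a ha => (mgf_pos_iff.2 (hX.integrable_exp_neg_mul (le_of_lt ha))).ne'
  exact (continuousOn_const.div continuousOn_id fun a ha => ne_of_gt ha).mul hlog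

end Entropic

section WeightedEntropic

variable {P : Measure Ω} {m : Measure ℝ} {a₀ a₁ : ℝ} {X Y : Ω → ℝ}

lemma werm_congr_ae (h : X =ᵐ[P] Y) : werm P m a₀ a₁ X = werm P m a₀ a₁ Y := by
  simp only [werm, entropic_eq_cgf, cgf, mgf_congr h]

variable [IsFiniteMeasure P] [NeZero P] [IsFiniteMeasureOnCompacts m]

lemma Lpos.integrableOn_entropic (ha₀ : 0 < a₀) (hX : Lpos P X) :
    IntegrableOn (fun a => entropic P a X) (Icc a₀ a₁) m :=
  (hX.continuousOn_entropic.mono fun _ ha => ha₀.trans_le ha.1).integrableOn_compact isCompact_Icc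

lemma Lpos.integrableOn_entropic_midpoint_defect (ha₀ : 0 < a₀) (hX : Lpos P X) (hY : Lpos P Y) :
    IntegrableOn (fun a => (entropic P a X + entropic P a Y) / 2 - entropic P a (midpoint ℝ X Y))
      (Icc a₀ a₁) m :=
  (((hX.integrableOn_entropic ha₀).add (hY.integrableOn_entropic ha₀)).div_const 2).sub
    ((lpos_midpoint hX hY).integrableOn_entropic ha₀)

lemma Lpos.setIntegral_entropic_midpoint_defect (ha₀ : 0 < a₀) (hX : Lpos P X) (hY : Lpos P Y) :
    ∫ a in Icc a₀ a₁,
        ((entropic P a X + entropic P a Y) / 2 - entropic P a (midpoint ℝ X Y)) ∂m =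
      (werm P m a₀ a₁ X + werm P m a₀ a₁ Y) / 2 - werm P m a₀ a₁ (midpoint ℝ X Y) := by
  have hXi := hX.integrableOn_entropic (m := m) (a₁ := a₁) ha₀
  have hYi := hY.integrableOn_entropic (m := m) (a₁ := a₁) ha₀
  rw [integral_sub (by exact (hXi.add hYi).div_const 2)
      ((lpos_midpoint hX hY).integrableOn_entropic ha₀),
    integral_div, integral_add hXi hYi]
  rfl

lemma Lpos.werm_midpoint_le (ha₀ : 0 < a₀) (hX : Lpos P X) (hY : Lpos P Y) :
    werm P m a₀ a₁ (midpoint ℝ X Y) ≤ (werm P m a₀ a₁ X + werm P m a₀ a₁ Y) / 2 := by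
  rw [← sub_nonneg, ← hX.setIntegral_entropic_midpoint_defect ha₀ hY]
  exact setIntegral_nonneg measurableSet_Icc fun a ha =>
    sub_nonneg.2 (hX.entropic_midpoint_le hY (ha₀.trans_le ha.1))

lemma Lpos.exists_ae_eq_add_const_of_werm_midpoint_eq (ha₀ : 0 < a₀) (hm : m (Icc a₀ a₁) ≠ 0)
    (hX : Lpos P X) (hY : Lpos P Y)
    (h : werm P m a₀ a₁ (midpoint ℝ X Y) = (werm P m a₀ a₁ X + werm P m a₀ a₁ Y) / 2) :
    ∃ c, X =ᵐ[P] fun ω => Y ω + c := by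
  have hdefect := hX.setIntegral_entropic_midpoint_defect (m := m) (a₁ := a₁) ha₀ hY
  have hmem : ∀ᵐ a ∂m.restrict (Icc a₀ a₁), a ∈ Icc a₀ a₁ := ae_restrict_mem measurableSet_Icc
  rw [h, sub_self, setIntegral_eq_zero_iff_of_nonneg_ae
    (hmem.mono fun a ha => sub_nonneg.2 (hX.entropic_midpoint_le hY (ha₀.trans_le ha.1)))
    (hX.integrableOn_entropic_midpoint_defect ha₀ hY)] at hdefect
  have : (ae (m.restrict (Icc a₀ a₁))).NeBot :=
    ae_neBot.2 fun h0 => hm (Measure.restrict_eq_zero.1 h0)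
  obtain ⟨a, hzero, ha⟩ := (hdefect.and hmem).exists
  exact hX.exists_ae_eq_add_const_of_entropic_midpoint_eq hY (ha₀.trans_le ha.1)
    (sub_eq_zero.1 hzero).symm

lemma Lpos.werm_add_const (ha₀ : 0 < a₀) (hX : Lpos P X) (c : ℝ) :
    werm P m a₀ a₁ (fun ω => X ω + c) = werm P m a₀ a₁ X - m.real (Icc a₀ a₁) * c := by
  calc werm P m a₀ a₁ (fun ω => X ω + c) = ∫ a in Icc a₀ a₁, (entropic P a X - c) ∂m :=
        setIntegral_congr_fun measurableSet_Icc fun a ha =>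
          hX.entropic_add_const (ha₀.trans_le ha.1) c
    _ = werm P m a₀ a₁ X - m.real (Icc a₀ a₁) * c := by
        rw [integral_sub (hX.integrableOn_entropic ha₀) (integrableOn_const measure_Icc_lt_top.ne),
          setIntegral_const, smul_eq_mul, werm]

end WeightedEntropic

section Feasible

variable {P : Measure Ω} {ρ X Y : Ω → ℝ} {x : ℝ}

lemma budget_midpoint_le (hρ : AEMeasurable ρ P) (hX : AEMeasurable X P) :
    budget P ρ (midpoint ℝ X Y) ≤ (budget P ρ X + budget P ρ Y) / 2 := by
  calc budget P ρ (midpoint ℝ X Y)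
      ≤ ∫⁻ ω, (ENNReal.ofReal (ρ ω * X ω) + ENNReal.ofReal (ρ ω * Y ω)) * 2⁻¹ ∂P := by
        refine lintegral_mono fun ω => ?_
        rw [midpoint_fun_apply, ← mul_div_assoc, mul_add, ENNReal.ofReal_div_of_pos two_pos,
          ENNReal.ofReal_ofNat, div_eq_mul_inv]
        gcongr
        exact ENNReal.ofReal_add_le
    _ = (budget P ρ X + budget P ρ Y) / 2 := by
        rw [lintegral_mul_const' _ _ (by simp),
          lintegral_add_left' (by exact (hρ.mul hX).ennreal_ofReal), div_eq_mul_inv, budget, budget]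

lemma feasible_midpoint (hρ : AEMeasurable ρ P) (hX : feasible P ρ x X) (hY : feasible P ρ x Y) :
    feasible P ρ x (midpoint ℝ X Y) :=
  ⟨lpos_midpoint hX.1 hY.1, calc
    budget P ρ (midpoint ℝ X Y) ≤ (budget P ρ X + budget P ρ Y) / 2 :=
      budget_midpoint_le hρ hX.1.1.aemeasurable
    _ ≤ (ENNReal.ofReal x + ENNReal.ofReal x) / 2 := by gcongr; exacts [hX.2, hY.2]
    _ = ENNReal.ofReal x := by rw [ENNReal.add_div, ENNReal.add_halves]⟩

lemma feasible_zero (P : Measure Ω) (ρ : Ω → ℝ) (x : ℝ) : feasible P ρ x 0 :=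
  ⟨⟨measurable_const, by simp⟩, by simp [budget]⟩

lemma feasible.ae_mul_nonneg (hρ_nonneg : ∀ᵐ ω ∂P, 0 ≤ ρ ω) (hX : feasible P ρ x X) :
    ∀ᵐ ω ∂P, 0 ≤ ρ ω * X ω := by
  filter_upwards [hρ_nonneg, hX.1.2] with ω hρω hXω using mul_nonneg hρω hXω

lemma feasible.integrable_mul (hρ : AEMeasurable ρ P) (hρ_nonneg : ∀ᵐ ω ∂P, 0 ≤ ρ ω)
    (hX : feasible P ρ x X) : Integrable (fun ω => ρ ω * X ω) P :=
  ⟨(hρ.mul hX.1.1.aemeasurable).aestronglyMeasurable,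
    (hasFiniteIntegral_iff_ofReal (hX.ae_mul_nonneg hρ_nonneg)).2
      (hX.2.trans_lt ENNReal.ofReal_lt_top)⟩

lemma feasible.integral_mul_le (hρ : AEMeasurable ρ P) (hρ_nonneg : ∀ᵐ ω ∂P, 0 ≤ ρ ω)
    (hx : 0 ≤ x) (hX : feasible P ρ x X) : ∫ ω, ρ ω * X ω ∂P ≤ x := by
  rw [integral_eq_lintegral_of_nonneg_ae (hX.ae_mul_nonneg hρ_nonneg)
    (hX.integrable_mul hρ hρ_nonneg).1]
  exact ENNReal.toReal_le_of_le_ofReal hx hX.2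

lemma integrable_min_one [IsFiniteMeasure P] (hρ : AEMeasurable ρ P)
    (hρ_nonneg : ∀ᵐ ω ∂P, 0 ≤ ρ ω) : Integrable (fun ω => min (ρ ω) 1) P := by
  refine Integrable.of_bound (hρ.min aemeasurable_const).aestronglyMeasurable 1 ?_
  filter_upwards [hρ_nonneg] with ω hω
  rw [Real.norm_of_nonneg (le_min hω zero_le_one)]
  exact min_le_right _ _

lemma integral_min_one_pos [IsFiniteMeasure P] [NeZero P] (hρ : AEMeasurable ρ P)
    (hρ_pos : ∀ᵐ ω ∂P, 0 < ρ ω) : 0 < ∫ ω, min (ρ ω) 1 ∂P := by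
  have hmin_pos : ∀ᵐ ω ∂P, 0 < min (ρ ω) 1 := hρ_pos.mono fun ω hω => lt_min hω one_pos
  rw [integral_pos_iff_support_of_nonneg_ae (hmin_pos.mono fun _ h => h.le)
    (integrable_min_one hρ (hρ_pos.mono fun _ h => h.le))]
  have hsupport : (Function.support fun ω => min (ρ ω) 1) =ᵐ[P] univ :=
    eventuallyEq_univ.2 (hmin_pos.mono fun _ h => h.ne')
  rw [measure_congr hsupport]
  exact NeZero.pos (P univ)

lemma feasible.mul_exp_le_mgf [IsFiniteMeasure P] [NeZero P] (hρ : AEMeasurable ρ P)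
    (hρ_pos : ∀ᵐ ω ∂P, 0 < ρ ω) (hx : 0 ≤ x) (hX : feasible P ρ x X) {a : ℝ} (ha : 0 ≤ a) :
    (∫ ω, min (ρ ω) 1 ∂P) * Real.exp (-a * x / ∫ ω, min (ρ ω) 1 ∂P) ≤ mgf X P (-a) := by
  have hρ_nonneg : ∀ᵐ ω ∂P, 0 ≤ ρ ω := hρ_pos.mono fun _ h => h.le
  have hr := integral_min_one_pos hρ hρ_pos
  have hwX_nonneg : ∀ᵐ ω ∂P, 0 ≤ min (ρ ω) 1 * X ω := by
    filter_upwards [hρ_nonneg, hX.1.2] with ω hρω hXω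
    positivity
  have hwX_le : ∀ᵐ ω ∂P, min (ρ ω) 1 * X ω ≤ ρ ω * X ω := by
    filter_upwards [hX.1.2] with ω hXω
    exact mul_le_mul_of_nonneg_right (min_le_left _ _) hXω
  have hρX := hX.integrable_mul hρ hρ_nonneg
  have hwX : Integrable (fun ω => min (ρ ω) 1 * X ω) P := by
    refine hρX.mono' ((hρ.min aemeasurable_const).mul hX.1.1.aemeasurable).aestronglyMeasurable ?_
    filter_upwards [hwX_nonneg, hwX_le] with ω h0 hle
    rwa [Real.norm_of_nonneg h0]
  have hmean : ∫ ω, min (ρ ω) 1 * X ω ∂P ≤ x :=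
    (integral_mono_ae hwX hρX hwX_le).trans (hX.integral_mul_le hρ hρ_nonneg hx)
  refine le_trans ?_ (integral_mul_exp_le_mgf (hX.1.integrable_exp_neg_mul ha)
    (hρ_nonneg.mono fun ω h => le_min h zero_le_one) (ae_of_all _ fun ω => min_le_right _ _)
    (integrable_min_one hρ hρ_nonneg) hwX hr.ne')
  gcongr (∫ ω, min (ρ ω) 1 ∂P) * Real.exp (?_ / _)
  exact mul_le_mul_of_nonpos_left hmean (neg_nonpos.2 ha)

lemma exists_forall_feasible_norm_entropic_le [IsProbabilityMeasure P] {a₀ : ℝ} (ha₀ : 0 < a₀)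
    (hρ : AEMeasurable ρ P) (hρ_pos : ∀ᵐ ω ∂P, 0 < ρ ω) (hx : 0 ≤ x) :
    ∃ C, ∀ X, feasible P ρ x X → ∀ a, a₀ ≤ a → ‖entropic P a X‖ ≤ C := by
  set r := ∫ ω, min (ρ ω) 1 ∂P
  have hr : 0 < r := integral_min_one_pos hρ hρ_pos
  refine ⟨(1 / a₀) * |Real.log r| + x / r, fun X hX a ha => ?_⟩
  have ha_pos : 0 < a := ha₀.trans_le ha
  have hcgf_nonpos : cgf X P (-a) ≤ 0 :=
    Real.log_nonpos mgf_nonneg (hX.1.mgf_neg_le_one ha_pos.le)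
  have hcgf_ge : Real.log r - a * x / r ≤ cgf X P (-a) := by
    calc Real.log r - a * x / r = Real.log (r * Real.exp (-a * x / r)) := by
          rw [Real.log_mul hr.ne' (Real.exp_ne_zero _), Real.log_exp]
          ring
      _ ≤ cgf X P (-a) := Real.log_le_log (by positivity)
          (hX.mul_exp_le_mgf hρ hρ_pos hx ha_pos.le)
  calc ‖entropic P a X‖ = (1 / a) * -cgf X P (-a) := by
        rw [entropic_eq_cgf, norm_mul, Real.norm_of_nonneg (by positivity),
          Real.norm_of_nonpos hcgf_nonpos]
    _ ≤ (1 / a) * (|Real.log r| + a * x / r) := by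
        gcongr
        linarith [neg_abs_le (Real.log r)]
    _ = (1 / a) * |Real.log r| + x / r := by field_simp
    _ ≤ (1 / a₀) * |Real.log r| + x / r := by gcongr

lemma lintegral_liminf_mul_le (hρ : AEMeasurable ρ P) {X : ℕ → Ω → ℝ}
    (hX : ∀ n, feasible P ρ x (X n)) :
    ∫⁻ ω, liminf (fun n => ENNReal.ofReal (ρ ω * X n ω)) atTop ∂P ≤ ENNReal.ofReal x :=
  (lintegral_liminf_le' fun n => (hρ.mul (hX n).1.1.aemeasurable).ennreal_ofReal).trans
    (liminf_le_of_frequently_le' (Frequently.of_forall fun n => (hX n).2))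

lemma feasible_of_ae_tendsto (hρ : AEMeasurable ρ P) {X : ℕ → Ω → ℝ} {Z : Ω → ℝ}
    (hX : ∀ n, feasible P ρ x (X n)) (hZ : Measurable Z)
    (hXZ : ∀ᵐ ω ∂P, Tendsto (fun n => X n ω) atTop (𝓝 (Z ω))) : feasible P ρ x Z := by
  refine ⟨⟨hZ, ?_⟩, (lintegral_congr_ae ?_).trans_le (lintegral_liminf_mul_le hρ hX)⟩
  · filter_upwards [hXZ, ae_all_iff.2 fun n => (hX n).1.2] with ω hω hnonneg
    exact ge_of_tendsto' hω hnonneg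
  · filter_upwards [hXZ] with ω hω
    exact (ENNReal.tendsto_ofReal (hω.const_mul (ρ ω))).liminf_eq.symm

lemma tendsto_atBot_or_exists_tendsto_of_tendsto_exp {ι : Type*} {f : Filter ι} {u : ι → ℝ}
    {l : ℝ} (h : Tendsto (fun i => Real.exp (u i)) f (𝓝 l)) :
    Tendsto u f atBot ∨ ∃ z, Tendsto u f (𝓝 z) := by
  rcases eq_or_ne l 0 with rfl | hl
  · exact Or.inl (Real.tendsto_exp_comp_nhds_zero.1 h)
  · exact Or.inr ⟨Real.log l, by simpa only [Real.log_exp] using h.log hl⟩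

lemma exists_feasible_ae_tendsto (hρ : AEMeasurable ρ P) (hρ_pos : ∀ᵐ ω ∂P, 0 < ρ ω)
    {X : ℕ → Ω → ℝ} (hX : ∀ n, feasible P ρ x (X n)) {t : ℝ} (ht : t < 0)
    (hexp : ∀ᵐ ω ∂P, ∃ l, Tendsto (fun n => Real.exp (t * X n ω)) atTop (𝓝 l)) :
    ∃ Z, feasible P ρ x Z ∧ ∀ᵐ ω ∂P, Tendsto (fun n => X n ω) atTop (𝓝 (Z ω)) := by
  have hmeas : ∀ n, AEMeasurable (X n) P := fun n => (hX n).1.1.aemeasurable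
  have hliminf_meas : AEMeasurable
      (fun ω => liminf (fun n => ENNReal.ofReal (ρ ω * X n ω)) atTop) P := by
    refine ⟨fun ω => liminf (fun n => ENNReal.ofReal (hρ.mk ρ ω * X n ω)) atTop,
      .liminf fun n => (hρ.measurable_mk.mul (hX n).1.1).ennreal_ofReal, ?_⟩
    filter_upwards [hρ.ae_eq_mk] with ω hω
    simp only [← hω]
  have hfinite : ∀ᵐ ω ∂P, liminf (fun n => ENNReal.ofReal (ρ ω * X n ω)) atTop < ⊤ :=
    ae_lt_top' hliminf_meas
      ((lintegral_liminf_mul_le hρ hX).trans_lt ENNReal.ofReal_lt_top).ne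
  have hlim : ∀ᵐ ω ∂P, ∃ z, Tendsto (fun n => X n ω) atTop (𝓝 z) := by
    filter_upwards [hexp, hfinite, hρ_pos] with ω ⟨l, hl⟩ hω hρω
    rcases tendsto_atBot_or_exists_tendsto_of_tendsto_exp hl with hbot | ⟨z, hz⟩
    · have htop : Tendsto (fun n => X n ω) atTop atTop := by
        simpa [ht.ne] using hbot.const_mul_atBot_of_neg (inv_lt_zero.2 ht)
      exact absurd (ENNReal.tendsto_ofReal_atTop.comp (htop.const_mul_atTop hρω)).liminf_eq hω.ne
    · exact ⟨t⁻¹ * z, by simpa [ht.ne] using hz.const_mul t⁻¹⟩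
  obtain ⟨Z, hZ, hXZ⟩ := measurable_limit_of_tendsto_metrizable_ae hmeas hlim
  exact ⟨Z, feasible_of_ae_tendsto hρ hX hZ hXZ, hXZ⟩

end Feasible

section Minimization

lemma exists_seq_tendsto_midpoint_defect {α : Type*} {mid : α → α → α} {K : ℕ → Set α}
    (hK : Antitone K) (hK_nonempty : ∀ n, (K n).Nonempty)
    (hK_mid : ∀ n, ∀ x ∈ K n, ∀ y ∈ K n, mid x y ∈ K n) {L : α → ℝ}
    (hL_mid : ∀ x ∈ K 0, ∀ y ∈ K 0, L (mid x y) ≤ (L x + L y) / 2)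
    (hL_below : BddBelow (L '' K 0)) (hL_above : BddAbove (L '' K 0)) :
    ∃ x : ℕ → α, (∀ n, x n ∈ K n) ∧
      Tendsto (fun p : ℕ × ℕ => L (x p.1) + L (x p.2) - 2 * L (mid (x p.1) (x p.2)))
        atTop (𝓝 0) := by
  set s : ℕ → ℝ := fun n => sInf (L '' K n)
  have hbelow : ∀ n, BddBelow (L '' K n) := fun n => hL_below.mono (image_mono (hK n.zero_le))
  have hs_le : ∀ n, ∀ x ∈ K n, s n ≤ L x := fun n x hx => csInf_le (hbelow n) ⟨x, hx, rfl⟩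
  have hs_mono : Monotone s := fun i j hij =>
    csInf_le_csInf (hbelow i) ((hK_nonempty j).image L) (image_mono (hK hij))
  have hnear : ∀ n : ℕ, ∃ x ∈ K n, L x < s n + 1 / (n + 1) := fun n => by
    obtain ⟨_, ⟨x, hx, rfl⟩, hlt⟩ := exists_lt_of_csInf_lt ((hK_nonempty n).image L)
      (lt_add_of_pos_right (s n) n.one_div_pos_of_nat)
    exact ⟨x, hx, hlt⟩
  choose x hxK hxs using hnear
  obtain ⟨M, hM⟩ := hL_above
  have hs_above : BddAbove (range s) := ⟨M, forall_mem_range.2 fun n =>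
    (hs_le n _ (hxK n)).trans (hM ⟨_, hK n.zero_le (hxK n), rfl⟩)⟩
  have hs_tendsto : Tendsto s atTop (𝓝 (⨆ n, s n)) := tendsto_atTop_ciSup hs_mono hs_above
  have hs_add : Tendsto (fun n : ℕ => s n + 1 / (n + 1)) atTop (𝓝 (⨆ n, s n)) := by
    simpa using hs_tendsto.add tendsto_one_div_add_atTop_nhds_zero_nat
  rw [← prod_atTop_atTop_eq]
  have hmin : Tendsto (fun p : ℕ × ℕ => min p.1 p.2) (atTop ×ˢ atTop) atTop :=
    tendsto_inf_atTop _ tendsto_fst tendsto_snd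
  have hgap := ((hs_add.comp tendsto_fst).add (hs_add.comp tendsto_snd)).sub
    ((hs_tendsto.comp hmin).const_mul 2)
  rw [← two_mul, sub_self] at hgap
  refine ⟨x, hxK, squeeze_zero (fun p => ?_) (fun p => ?_) hgap⟩
  · linarith [hL_mid _ (hK (Nat.zero_le _) (hxK p.1)) _ (hK (Nat.zero_le _) (hxK p.2))]
  · have hmid := hs_le (min p.1 p.2) _
      (hK_mid _ _ (hK (min_le_left _ _) (hxK p.1)) _ (hK (min_le_right _ _) (hxK p.2)))
    simp only [Function.comp_apply]
    linarith [hxs p.1, hxs p.2]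

lemma exists_subseq_ae_tendsto_of_tendsto_integral_sq_sub {μ : Measure Ω} {f : ℕ → Ω → ℝ}
    (hf : ∀ n, MemLp (f n) 2 μ)
    (h : Tendsto (fun p : ℕ × ℕ => ∫ ω, (f p.1 ω - f p.2 ω) ^ 2 ∂μ) atTop (𝓝 0)) :
    ∃ φ : ℕ → ℕ, StrictMono φ ∧
      ∃ g : Ω → ℝ, ∀ᵐ ω ∂μ, Tendsto (fun n => f (φ n) ω) atTop (𝓝 (g ω)) := by
  set F : ℕ → Lp ℝ 2 μ := fun n => (hf n).toLp (f n)
  have hdist : ∀ i j, dist (F i) (F j) = √(∫ ω, (f i ω - f j ω) ^ 2 ∂μ) := fun i j => by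
    rw [dist_eq_norm, ← MemLp.toLp_sub, Lp.norm_toLp, toReal_eLpNorm ((hf i).sub (hf j)).1,
      lpNorm_eq_integral_norm_rpow_toReal two_ne_zero ENNReal.ofNat_ne_top ((hf i).sub (hf j)).1]
    simp [Real.sqrt_eq_rpow]
  have hcauchy : CauchySeq F := by
    rw [cauchySeq_iff_tendsto_dist_atTop_0]
    simpa only [hdist, Real.sqrt_zero] using h.sqrt
  obtain ⟨G, hG⟩ := cauchySeq_tendsto_of_complete hcauchy
  obtain ⟨φ, hφ, hFG⟩ := (tendstoInMeasure_of_tendsto_Lp hG).exists_seq_tendsto_ae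
  refine ⟨φ, hφ, G, ?_⟩
  filter_upwards [hFG, ae_all_iff.2 fun n => (hf n).coeFn_toLp] with ω hω hF
  simpa only [F, hF] using hω

lemma exists_minimizing_seq_exp_half_ae_tendsto {μ : Measure Ω} {F : Set (Ω → ℝ)} {t : ℝ}
    (hF : F.Nonempty) (hF_mid : ∀ X ∈ F, ∀ Y ∈ F, midpoint ℝ X Y ∈ F)
    (hF_int : ∀ X ∈ F, Integrable (fun ω => Real.exp (t * X ω)) μ)
    (hF_mgf : BddAbove ((fun X => mgf X μ t) '' F)) {H : (Ω → ℝ) → ℝ}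
    (hH_mid : ∀ X ∈ F, ∀ Y ∈ F, H (midpoint ℝ X Y) ≤ (H X + H Y) / 2)
    (hH : BddBelow (H '' F)) :
    ∃ X : ℕ → Ω → ℝ, (∀ n, X n ∈ F) ∧
      Tendsto (fun n => H (X n)) atTop (𝓝 (sInf (H '' F))) ∧
      ∀ᵐ ω ∂μ, ∃ l, Tendsto (fun n => Real.exp (t * X n ω / 2)) atTop (𝓝 l) := by
  set K : ℕ → Set (Ω → ℝ) := fun n => {X ∈ F | H X ≤ sInf (H '' F) + 1 / (n + 1)}
  have hK_anti : Antitone K := fun i j hij X hX =>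
    ⟨hX.1, hX.2.trans (add_le_add_right (Nat.one_div_le_one_div hij) _)⟩
  have hK_nonempty : ∀ n, (K n).Nonempty := fun n => by
    obtain ⟨_, ⟨X, hX, rfl⟩, hlt⟩ := exists_lt_of_csInf_lt (hF.image H)
      (lt_add_of_pos_right (sInf (H '' F)) n.one_div_pos_of_nat)
    exact ⟨X, hX, hlt.le⟩
  have hK_mid : ∀ n, ∀ X ∈ K n, ∀ Y ∈ K n, midpoint ℝ X Y ∈ K n := fun n X hX Y hY =>
    ⟨hF_mid X hX.1 Y hY.1, by linarith [hH_mid X hX.1 Y hY.1, hX.2, hY.2]⟩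
  obtain ⟨X, hXK, hdefect⟩ := exists_seq_tendsto_midpoint_defect (L := fun X => mgf X μ t)
    hK_anti hK_nonempty hK_mid (fun X hX Y hY => mgf_midpoint_le (hF_int X hX.1) (hF_int Y hY.1))
    ⟨0, forall_mem_image.2 fun _ _ => mgf_nonneg⟩ (hF_mgf.mono (image_mono fun _ hX => hX.1))
  have hX_int := fun n => hF_int (X n) (hXK n).1
  have hL2 : ∀ i j, ∫ ω, (Real.exp (t * X i ω / 2) - Real.exp (t * X j ω / 2)) ^ 2 ∂μ =
      mgf (X i) μ t + mgf (X j) μ t - 2 * mgf (midpoint ℝ (X i) (X j)) μ t := fun i j => by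
    simpa using integral_sq_sub_exp_half (hX_int i) (hX_int j) 1 1
  obtain ⟨φ, hφ, g, hg⟩ := exists_subseq_ae_tendsto_of_tendsto_integral_sq_sub
    (fun n => memLp_two_exp_half (hX_int n)) (by simpa only [hL2] using hdefect)
  have hHX : Tendsto (fun n => H (X n)) atTop (𝓝 (sInf (H '' F))) :=
    tendsto_of_tendsto_of_tendsto_of_le_of_le tendsto_const_nhds
      (by simpa using tendsto_one_div_add_atTop_nhds_zero_nat.const_add (sInf (H '' F)))
      (fun n => csInf_le hH ⟨X n, (hXK n).1, rfl⟩) (fun n => (hXK n).2)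
  exact ⟨X ∘ φ, fun n => (hXK (φ n)).1, hHX.comp hφ.tendsto_atTop, hg.mono fun ω hω => ⟨g ω, hω⟩⟩

end Minimization

section Existence

variable {P : Measure Ω} {m : Measure ℝ} {a₀ a₁ : ℝ} {ρ : Ω → ℝ} {x : ℝ}

lemma tendsto_entropic [IsFiniteMeasure P] [NeZero P] {X : ℕ → Ω → ℝ} {Z : Ω → ℝ} {a : ℝ}
    (ha : 0 < a) (hX : ∀ n, Lpos P (X n)) (hZ : Lpos P Z)
    (hXZ : ∀ᵐ ω ∂P, Tendsto (fun n => X n ω) atTop (𝓝 (Z ω))) :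
    Tendsto (fun n => entropic P a (X n)) atTop (𝓝 (entropic P a Z)) := by
  have hmgf : Tendsto (fun n => mgf (X n) P (-a)) atTop (𝓝 (mgf Z P (-a))) := by
    refine tendsto_integral_of_dominated_convergence (fun _ => 1)
      (fun n => ((hX n).integrable_exp_neg_mul ha.le).1) (integrable_const 1) (fun n => ?_) ?_
    · filter_upwards [(hX n).2] with ω hω
      rw [Real.norm_of_nonneg (Real.exp_pos _).le, Real.exp_le_one_iff]
      exact mul_nonpos_of_nonpos_of_nonneg (neg_nonpos.2 ha.le) hω
    · filter_upwards [hXZ] with ω hω using (hω.const_mul (-a)).rexp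
  exact (hmgf.log (mgf_pos_iff.2 (hZ.integrable_exp_neg_mul ha.le)).ne').const_mul (1 / a)

lemma tendsto_werm [IsFiniteMeasure P] [NeZero P] [IsFiniteMeasureOnCompacts m] (ha₀ : 0 < a₀)
    {X : ℕ → Ω → ℝ} {Z : Ω → ℝ} (hX : ∀ n, Lpos P (X n)) (hZ : Lpos P Z) {C : ℝ}
    (hC : ∀ n, ∀ a, a₀ ≤ a → ‖entropic P a (X n)‖ ≤ C)
    (hXZ : ∀ᵐ ω ∂P, Tendsto (fun n => X n ω) atTop (𝓝 (Z ω))) :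
    Tendsto (fun n => werm P m a₀ a₁ (X n)) atTop (𝓝 (werm P m a₀ a₁ Z)) := by
  have hmem : ∀ᵐ a ∂m.restrict (Icc a₀ a₁), a ∈ Icc a₀ a₁ := ae_restrict_mem measurableSet_Icc
  exact tendsto_integral_of_dominated_convergence (fun _ => C)
    (fun n => ((hX n).integrableOn_entropic ha₀).1) (integrableOn_const measure_Icc_lt_top.ne)
    (fun n => hmem.mono fun a ha => hC n a ha.1)
    (hmem.mono fun a ha => tendsto_entropic (ha₀.trans_le ha.1) hX hZ hXZ)

lemma exists_isMinOn_werm [IsProbabilityMeasure P] [IsFiniteMeasureOnCompacts m] (ha₀ : 0 < a₀)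
    (hρ : AEMeasurable ρ P) (hρ_pos : ∀ᵐ ω ∂P, 0 < ρ ω) (hx : 0 ≤ x) :
    ∃ X, feasible P ρ x X ∧ IsMinOn (werm P m a₀ a₁) {X | feasible P ρ x X} X := by
  obtain ⟨C, hC⟩ := exists_forall_feasible_norm_entropic_le ha₀ hρ hρ_pos hx
  have hbelow : BddBelow (werm P m a₀ a₁ '' {X | feasible P ρ x X}) := by
    refine ⟨-(C * m.real (Icc a₀ a₁)), forall_mem_image.2 fun X hX => ?_⟩
    exact neg_le_of_abs_le (norm_setIntegral_le_of_norm_le_const measure_Icc_lt_top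
      fun a ha => hC X hX a ha.1)
  have hmgf : BddAbove ((fun X => mgf X P (-1)) '' {X | feasible P ρ x X}) :=
    ⟨1, forall_mem_image.2 fun X hX => hX.1.mgf_neg_le_one zero_le_one⟩
  obtain ⟨X, hX, hwerm, hexp⟩ := exists_minimizing_seq_exp_half_ae_tendsto
    (F := {X | feasible P ρ x X}) ⟨0, feasible_zero P ρ x⟩
    (fun X hX Y hY => feasible_midpoint hρ hX hY)
    (fun X hX => hX.1.integrable_exp_neg_mul zero_le_one) hmgf
    (fun X hX Y hY => hX.1.werm_midpoint_le ha₀ hY.1) hbelow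
  obtain ⟨Z, hZ, hXZ⟩ := exists_feasible_ae_tendsto hρ hρ_pos hX (t := -1 / 2) (by norm_num)
    (by simpa only [mul_div_right_comm] using hexp)
  have hmin : werm P m a₀ a₁ Z = sInf (werm P m a₀ a₁ '' {X | feasible P ρ x X}) :=
    tendsto_nhds_unique
      (tendsto_werm ha₀ (fun n => (hX n).1) hZ.1 (fun n => hC (X n) (hX n)) hXZ) hwerm
  exact ⟨Z, hZ, fun Y hY => hmin.trans_le (csInf_le hbelow ⟨Y, hY, rfl⟩)⟩

end Existence

lemma ae_eq_of_isMinOn_werm {P : Measure Ω} [IsFiniteMeasure P] [NeZero P] {m : Measure ℝ}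
    [IsFiniteMeasureOnCompacts m] {a₀ a₁ : ℝ} (ha₀ : 0 < a₀) (hm : m (Icc a₀ a₁) ≠ 0)
    {F : Set (Ω → ℝ)} (hF : ∀ X ∈ F, Lpos P X) (hF_mid : ∀ X ∈ F, ∀ Y ∈ F, midpoint ℝ X Y ∈ F)
    {X Y : Ω → ℝ} (hX : X ∈ F) (hX_min : IsMinOn (werm P m a₀ a₁) F X)
    (hY : Y ∈ F) (hY_min : IsMinOn (werm P m a₀ a₁) F Y) : X =ᵐ[P] Y := by
  have heq : werm P m a₀ a₁ X = werm P m a₀ a₁ Y := le_antisymm (hX_min hY) (hY_min hX)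
  have hmid : werm P m a₀ a₁ X ≤ werm P m a₀ a₁ (midpoint ℝ X Y) := hX_min (hF_mid X hX Y hY)
  obtain ⟨c, hc⟩ := (hF X hX).exists_ae_eq_add_const_of_werm_midpoint_eq ha₀ hm (hF Y hY)
    (by linarith [(hF X hX).werm_midpoint_le (m := m) (a₁ := a₁) ha₀ (hF Y hY)])
  have hshift : werm P m a₀ a₁ Y = werm P m a₀ a₁ Y - m.real (Icc a₀ a₁) * c := by
    rw [← (hF Y hY).werm_add_const ha₀, ← werm_congr_ae hc, heq]
  have hm_real : m.real (Icc a₀ a₁) ≠ 0 := (measureReal_ne_zero_iff measure_Icc_lt_top.ne).2 hm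
  obtain rfl : c = 0 := (mul_eq_zero_iff_left hm_real).1 (by linarith)
  simpa only [add_zero] using hc

theorem risk_minimization_exists_unique_general (P : Measure Ω) [IsProbabilityMeasure P]
    (a₀ a₁ : ℝ) (ha₀ : 0 < a₀) (m : Measure ℝ) [IsFiniteMeasureOnCompacts m]
    (hm : m (Icc a₀ a₁) ≠ 0) (ρ : Ω → ℝ) (hρ : AEMeasurable ρ P) (hρ_pos : ∀ᵐ ω ∂P, 0 < ρ ω)
    (x : ℝ) (hx : 0 ≤ x) :
    (∃ X, feasible P ρ x X ∧
        ∀ Y, feasible P ρ x Y → werm P m a₀ a₁ X ≤ werm P m a₀ a₁ Y) ∧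
    (∀ X₁ X₂, feasible P ρ x X₁ →
        (∀ Y, feasible P ρ x Y → werm P m a₀ a₁ X₁ ≤ werm P m a₀ a₁ Y) →
      feasible P ρ x X₂ →
        (∀ Y, feasible P ρ x Y → werm P m a₀ a₁ X₂ ≤ werm P m a₀ a₁ Y) →
      X₁ =ᵐ[P] X₂) :=
  ⟨exists_isMinOn_werm ha₀ hρ hρ_pos hx, fun _ _ hX₁ hmin₁ hX₂ hmin₂ =>
    ae_eq_of_isMinOn_werm ha₀ hm (F := {X | feasible P ρ x X}) (fun _ hX => hX.1)
      (fun _ hX _ hY => feasible_midpoint hρ hX hY) hX₁ hmin₁ hX₂ hmin₂⟩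

/-- for every `x > 0` the risk minimization problem `min h(X)` over `𝒳(x)` has
a solution, unique up to a.s. equality. -/
theorem risk_minimization_exists_unique (P : Measure Ω) [IsProbabilityMeasure P]
    (a₀ a₁ : ℝ) (ha₀ : 0 < a₀) (ha₀₁ : a₀ < a₁)
    (m : Measure ℝ) [IsProbabilityMeasure m] (hm : m (Set.Icc a₀ a₁) = 1)
    (ρ : Ω → ℝ) (hmρ : Measurable ρ) (hρ0 : ∀ᵐ ω ∂P, 0 < ρ ω) (hρint : Integrable ρ P)
    (x : ℝ) (hx : 0 < x) :
    (∃ X, feasible P ρ x X ∧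
        ∀ Y, feasible P ρ x Y → werm P m a₀ a₁ X ≤ werm P m a₀ a₁ Y) ∧
    (∀ X₁ X₂, feasible P ρ x X₁ →
        (∀ Y, feasible P ρ x Y → werm P m a₀ a₁ X₁ ≤ werm P m a₀ a₁ Y) →
      feasible P ρ x X₂ →
        (∀ Y, feasible P ρ x Y → werm P m a₀ a₁ X₂ ≤ werm P m a₀ a₁ Y) →
      X₁ =ᵐ[P] X₂) :=
  risk_minimization_exists_unique_general P a₀ a₁ ha₀ m (by simp [hm])
    ρ hmρ.aemeasurable hρ0 x hx.le
end
end
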